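/- arXiv:1310.4618 — 3 statements merged into one kernel-verified Lean document; each statement's English description precedes it below -/
import Mathlib

section
/- Let n ≥ 3 and let 𝔯 ∈ S²_B(⋀²ℝ^{n+1}) be the curvature operator of Sⁿ × ℝ with the standard product metric normalized to unit scalar curvature. Then for every ξ ∈ ⟨W⟩ with ‖ξ‖ = 1, one has ⟨DQ̃(𝔯)(ξ), ξ⟩ = −1/n < 0; in particular every Weyl direction is a stable direction for DQ̃(𝔯). -/
open scoped BigOperators
open Matrix Filter

noncomputable section

/-- `so n`: the Lie algebra of real skew-symmetric `n × n` matrices, as a submodule of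
matrices.  It is the model for `⋀²ℝⁿ` under the identification `x ∧ y ↦ x yᵀ - y xᵀ`,
i.e. `(x ∧ y)(z) = ⟨y,z⟩x - ⟨x,z⟩y`. -/
def so (n : ℕ) : Submodule ℝ (Matrix (Fin n) (Fin n) ℝ) where
  carrier := {A | Aᵀ = -A}
  add_mem' := fun {a b} ha hb => by
    simp only [Set.mem_setOf_eq] at *
    rw [Matrix.transpose_add, ha, hb, neg_add]
  zero_mem' := by simp
  smul_mem' := fun c {a} ha => by
    simp only [Set.mem_setOf_eq] at *
    rw [Matrix.transpose_smul, ha, smul_neg]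

lemma mem_so {n : ℕ} {A : Matrix (Fin n) (Fin n) ℝ} : A ∈ so n ↔ Aᵀ = -A := Iff.rfl

lemma so_skew {n : ℕ} (X : so n) : (X.1)ᵀ = -X.1 := mem_so.mp X.2

lemma so_skew' {n : ℕ} (X : so n) (i j : Fin n) : X.1 j i = -X.1 i j := by
  have h := congrFun (congrFun (so_skew X) i) j
  simpa [Matrix.transpose_apply] using h

/-- The Lie bracket (matrix commutator) on `so n`. -/
def brkt {n : ℕ} (X Y : so n) : so n :=
  ⟨X.1 * Y.1 - Y.1 * X.1, by
    rw [mem_so, Matrix.transpose_sub, Matrix.transpose_mul, Matrix.transpose_mul,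
      so_skew X, so_skew Y]
    simp [neg_sub]⟩

/-- The inner product `⟨A, B⟩ = -(1/2) tr (A B)` on `so n ≅ ⋀²ℝⁿ`, for which
`{e_i ∧ e_j : i < j}` is orthonormal. -/
def ip {n : ℕ} (X Y : so n) : ℝ := -(1 / 2) * (X.1 * Y.1).trace

/-- `ip X` as a linear functional. -/
def ipL {n : ℕ} (X : so n) : so n →ₗ[ℝ] ℝ where
  toFun Y := ip X Y
  map_add' Y Z := by
    simp [ip, Matrix.mul_add, Matrix.trace_add]
    ring
  map_smul' c Y := by
    simp [ip, Matrix.mul_smul, Matrix.trace_smul]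
    ring

/-- The wedge `x ∧ y` of two vectors, as an element of `so n`. -/
def wedgeVec {n : ℕ} (x y : Fin n → ℝ) : so n :=
  ⟨Matrix.of fun i j => x i * y j - y i * x j, by
    rw [mem_so]
    ext i j
    simp [Matrix.transpose_apply]
    ring⟩

/-- Index set for the standard orthonormal basis `{e_i ∧ e_j : i < j}` of `so n`. -/
def pairs (n : ℕ) : Finset (Fin n × Fin n) := Finset.univ.filter (fun p => p.1 < p.2)

/-- Standard basis vector of `ℝⁿ`. -/
def stdVec {n : ℕ} (i : Fin n) : Fin n → ℝ := Pi.single i 1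

/-- The standard orthonormal basis element `e_i ∧ e_j` of `so n`. -/
def omegaB {n : ℕ} (p : Fin n × Fin n) : so n := wedgeVec (stdVec p.1) (stdVec p.2)

/-- Hamilton's sharp product `A # B` of self-adjoint endomorphisms of `⋀²ℝⁿ ≅ so n`:
`⟨(A # B)(φ), ψ⟩ = (1/2) Σ_{α,β} ⟨[A ω_α, B ω_β], φ⟩ ⟨[ω_α, ω_β], ψ⟩`
over the orthonormal basis `{ω_α} = {e_i ∧ e_j : i < j}`. -/
def sharp {n : ℕ} (A B : Module.End ℝ (so n)) : Module.End ℝ (so n) :=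
  (1 / 2 : ℝ) • ∑ p ∈ pairs n, ∑ q ∈ pairs n,
    (ipL (brkt (A (omegaB p)) (B (omegaB q)))).smulRight (brkt (omegaB p) (omegaB q))

/-- The bilinear map `Q(A,B) = (1/2)(AB + BA) + A # B`. -/
def Qbil {n : ℕ} (A B : Module.End ℝ (so n)) : Module.End ℝ (so n) :=
  (1 / 2 : ℝ) • (A * B + B * A) + sharp A B

/-- `Q(R) = R² + R # R`. -/
def Qop {n : ℕ} (R : Module.End ℝ (so n)) : Module.End ℝ (so n) := R * R + sharp R R

/-- Self-adjointness of an endomorphism of `so n ≅ ⋀²ℝⁿ`. -/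
def IsSelfAdjointCO {n : ℕ} (R : Module.End ℝ (so n)) : Prop :=
  ∀ X Y : so n, ip (R X) Y = ip X (R Y)

/-- The first Bianchi identity. -/
def SatBianchi {n : ℕ} (R : Module.End ℝ (so n)) : Prop :=
  ∀ x y z w : Fin n → ℝ,
    ip (R (wedgeVec x y)) (wedgeVec z w) + ip (R (wedgeVec y z)) (wedgeVec x w)
      + ip (R (wedgeVec z x)) (wedgeVec y w) = 0

/-- Algebraic curvature operators: self-adjoint endomorphisms of `⋀²ℝⁿ` satisfying the
first Bianchi identity.  `IsACO R` says `R ∈ S²_B(⋀²ℝⁿ)`. -/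
def IsACO {n : ℕ} (R : Module.End ℝ (so n)) : Prop := IsSelfAdjointCO R ∧ SatBianchi R

/-- The Ricci tensor of `R`, `Ric(R)_{ij} = Σ_k ⟨R(e_i ∧ e_k), e_j ∧ e_k⟩`. -/
def RicM {n : ℕ} (R : Module.End ℝ (so n)) : Matrix (Fin n) (Fin n) ℝ :=
  Matrix.of fun i j => ∑ k, ip (R (wedgeVec (stdVec i) (stdVec k))) (wedgeVec (stdVec j) (stdVec k))

/-- The scalar curvature `s(R) = tr Ric(R)`. -/
def scal {n : ℕ} (R : Module.End ℝ (so n)) : ℝ := (RicM R).trace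

/-- `‖Ric(R)‖² = tr (Ric(R)²)`. -/
def ricNormSq {n : ℕ} (R : Module.End ℝ (so n)) : ℝ := (RicM R * RicM R).trace

/-- The traceless Ricci tensor `Ric₀(R)`. -/
def Ric0M {n : ℕ} (R : Module.End ℝ (so n)) : Matrix (Fin n) (Fin n) ℝ :=
  RicM R - (scal R / n) • (1 : Matrix (Fin n) (Fin n) ℝ)

/-- `R` is Einstein if `Ric(R)` is a scalar multiple of the identity of `ℝⁿ`. -/
def IsEinstein {n : ℕ} (R : Module.End ℝ (so n)) : Prop :=
  ∃ c : ℝ, RicM R = c • (1 : Matrix (Fin n) (Fin n) ℝ)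

lemma wedgeEnd_key {n : ℕ} (A B : Matrix (Fin n) (Fin n) ℝ) (M : so n) :
    (A * M.1 * Bᵀ + B * M.1 * Aᵀ)ᵀ = -(A * M.1 * Bᵀ + B * M.1 * Aᵀ) := by
  have hM := so_skew M
  rw [Matrix.transpose_add, Matrix.transpose_mul, Matrix.transpose_mul,
    Matrix.transpose_mul, Matrix.transpose_mul, Matrix.transpose_transpose,
    Matrix.transpose_transpose, hM]
  simp only [Matrix.mul_neg, Matrix.neg_mul, Matrix.mul_assoc, neg_add]
  abel

/-- The wedge `A ∧ B` of two endomorphisms of `ℝⁿ`, as an endomorphism of `⋀²ℝⁿ ≅ so n`: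
`(A ∧ B)(v ∧ w) = (1/2)(Av ∧ Bw + Bv ∧ Aw)`, i.e. `M ↦ (1/2)(A M Bᵀ + B M Aᵀ)`. -/
def wedgeEnd {n : ℕ} (A B : Matrix (Fin n) (Fin n) ℝ) : Module.End ℝ (so n) where
  toFun M := ⟨(1 / 2 : ℝ) • (A * M.1 * Bᵀ + B * M.1 * Aᵀ), by
    rw [mem_so, Matrix.transpose_smul, wedgeEnd_key, smul_neg]⟩
  map_add' M N := by
    apply Subtype.ext
    simp [Matrix.mul_add, Matrix.add_mul, smul_add]
    abel
  map_smul' c M := by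
    apply Subtype.ext
    simp [Matrix.mul_smul, Matrix.smul_mul, smul_smul, mul_comm]

/-- Inner product `⟨A, B⟩ = tr(A ∘ B)` on endomorphisms of `⋀²ℝⁿ` (the Frobenius inner
product for self-adjoint operators). -/
def endIP {n : ℕ} (A B : Module.End ℝ (so n)) : ℝ := LinearMap.trace ℝ ↥(so n) (A * B)

/-- Norm of an endomorphism of `⋀²ℝⁿ` induced by `endIP`. -/
def endNorm {n : ℕ} (A : Module.End ℝ (so n)) : ℝ := Real.sqrt (endIP A A)

/-- Huisken's trilinear form `tri(A,B,C) = tr((AB + BA + 2 A#B) ∘ C) = 2⟨Q(A,B), C⟩`. -/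
def tri {n : ℕ} (A B C : Module.End ℝ (so n)) : ℝ :=
  LinearMap.trace ℝ ↥(so n) ((A * B + B * A + (2 : ℝ) • sharp A B) * C)

/-- The identity component `R_I = (s(R)/(n(n-1))) id ∧ id` of a curvature operator. -/
def compI {n : ℕ} (R : Module.End ℝ (so n)) : Module.End ℝ (so n) :=
  (scal R / ((n : ℝ) * ((n : ℝ) - 1))) • 1

/-- The traceless-Ricci component `R_{Ric₀} = (2/(n-2)) Ric₀(R) ∧ id`. -/
def compRic0 {n : ℕ} (R : Module.End ℝ (so n)) : Module.End ℝ (so n) :=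
  (2 / ((n : ℝ) - 2)) • wedgeEnd (Ric0M R) 1

/-- The Weyl component `R_W = R - R_I - R_{Ric₀}`. -/
def compW {n : ℕ} (R : Module.End ℝ (so n)) : Module.End ℝ (so n) := R - compI R - compRic0 R

/-- The derivative `DQ̃(R)` of the normalized vector field
`Q̃(R) = Q(R) - ‖Ric R‖² R` at `R`, applied to `A`:
`DQ̃(R)(A) = 2Q(R,A) - ‖Ric R‖² A - 2 tr(Ric R · Ric A) R`. -/
def DQt {n : ℕ} (R A : Module.End ℝ (so n)) : Module.End ℝ (so n) :=
  (2 : ℝ) • Qbil R A - ricNormSq R • A - (2 * (RicM R * RicM A).trace) • R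


/-- The traceless self-adjoint endomorphism `T` of `ℝ^{n+1}` with eigenvalue
`1/(n(n+1))` of multiplicity `n` and `-1/(n+1)` of multiplicity `1`: the traceless
Ricci tensor of the normalized product metric on `Sⁿ × ℝ`. -/
def sphereT (n : ℕ) : Matrix (Fin (n + 1)) (Fin (n + 1)) ℝ :=
  Matrix.diagonal (fun i => if (i : ℕ) = n then -(1 / ((n : ℝ) + 1))
    else 1 / ((n : ℝ) * ((n : ℝ) + 1)))

/-- The curvature operator of `Sⁿ × ℝ` with the standard product metric normalized to
unit scalar curvature: `𝔯 = (1/(n(n+1))) id ∧ id + (2/(n-1)) T ∧ id`. -/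
def sphereR (n : ℕ) : Module.End ℝ (so (n + 1)) :=
  (1 / ((n : ℝ) * ((n : ℝ) + 1))) • (1 : Module.End ℝ (so (n + 1)))
    + (2 / ((n : ℝ) - 1)) • wedgeEnd (sphereT n) 1

/-- shorthand for `e_i ∧ e_j` -/
def wB {m : ℕ} (i j : Fin m) : so m := wedgeVec (stdVec i) (stdVec j)

/-- Kronecker delta -/
def kd {m : ℕ} (i j : Fin m) : ℝ := if i = j then 1 else 0

lemma kd_comm {m : ℕ} (i j : Fin m) : kd i j = kd j i := by
  simp [kd, eq_comm]

lemma wB_apply {m : ℕ} (i j a b : Fin m) :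
    (wB i j).1 a b = kd a i * kd b j - kd a j * kd b i := by
  simp [wB, wedgeVec, stdVec, kd, Pi.single_apply]

lemma wB_swap {m : ℕ} (i j : Fin m) : wB j i = - wB i j := by
  apply Subtype.ext
  ext a b
  simp only [Submodule.coe_neg, Matrix.neg_apply, wB_apply]
  ring

lemma kd_sum {m : ℕ} (i : Fin m) (f : Fin m → ℝ) : ∑ a, kd a i * f a = f i := by
  simp [kd]

lemma kd_sum' {m : ℕ} (i : Fin m) (f : Fin m → ℝ) : ∑ a, kd i a * f a = f i := by
  simp [kd]

lemma ip_eq {m : ℕ} (X Y : so m) : ip X Y = (1 / 2) * ∑ a, ∑ b, X.1 a b * Y.1 a b := by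
  simp only [ip, Matrix.trace, Matrix.diag, Matrix.mul_apply, neg_mul, ← mul_neg,
    ← Finset.sum_neg_distrib]
  congr 1
  refine Finset.sum_congr rfl fun a _ => Finset.sum_congr rfl fun b _ => ?_
  rw [so_skew' Y a b]; ring

lemma ip_comm {m : ℕ} (X Y : so m) : ip X Y = ip Y X := by
  simp only [ip_eq, mul_comm]

lemma ip_wB {m : ℕ} (X : so m) (i j : Fin m) : ip X (wB i j) = X.1 i j := by
  have h : ∀ a b, X.1 a b * (wB i j).1 a b
      = kd a i * (kd b j * X.1 a b) - kd a j * (kd b i * X.1 a b) := by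
    intro a b; rw [wB_apply]; ring
  simp only [ip_eq, h, Finset.sum_sub_distrib, ← Finset.mul_sum, kd_sum]
  rw [so_skew' X i j]; ring

lemma pairs_sum {m : ℕ} (f : Fin m → Fin m → ℝ) (hs : ∀ i j, f i j = f j i)
    (h0 : ∀ i, f i i = 0) :
    ∑ p ∈ pairs m, f p.1 p.2 = (1 / 2) * ∑ i, ∑ j, f i j := by
  have h1 : ∑ p ∈ pairs m, f p.1 p.2 = ∑ i, ∑ j, if i < j then f i j else 0 := by
    rw [pairs, Finset.sum_filter, Fintype.sum_prod_type]
  have h2 : ∑ i, ∑ j, (if i < j then f i j else 0) = ∑ i, ∑ j, if j < i then f i j else 0 := by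
    rw [Finset.sum_comm]
    refine Finset.sum_congr rfl fun a _ => Finset.sum_congr rfl fun b _ => ?_
    rw [hs]
  have h3 : ∑ i, ∑ j, f i j = ∑ i, ∑ j, (if i < j then f i j else 0)
      + ∑ i, ∑ j, (if j < i then f i j else 0) := by
    simp only [← Finset.sum_add_distrib]
    refine Finset.sum_congr rfl fun a _ => Finset.sum_congr rfl fun b _ => ?_
    rcases lt_trichotomy a b with h | h | h
    · simp [h, h.le, not_lt.mpr h.le]
    · subst h; simp [h0]
    · simp [h, not_lt.mpr h.le]
  rw [h1, h3, ← h2]; ring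

lemma so_expand {m : ℕ} (X : so m) : X = ∑ p ∈ pairs m, ip X (omegaB p) • omegaB p := by
  apply Subtype.ext
  ext a b
  have h := pairs_sum (fun i j => ip X (wB i j) * (wB i j).1 a b)
    (fun i j => by simp only [ip_wB, wB_apply]; rw [so_skew' X j i]; ring)
    (fun i => by simp only [wB_apply]; ring)
  have h' : (∑ p ∈ pairs m, ip X (omegaB p) • omegaB p).1 a b
      = ∑ p ∈ pairs m, ip X (wB p.1 p.2) * (wB p.1 p.2).1 a b := by
    simp [Matrix.sum_apply, omegaB, wB]
  rw [h', h]
  have h2 : ∀ i j, ip X (wB i j) * (wB i j).1 a b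
      = kd a i * (kd b j * X.1 i j) - kd b i * (kd a j * X.1 i j) := by
    intro i j; rw [ip_wB, wB_apply]; ring
  simp only [h2, Finset.sum_sub_distrib, ← Finset.mul_sum, kd_sum']
  rw [so_skew' X a b]; ring

lemma trace_smulRight' {m : ℕ} (f : so m →ₗ[ℝ] ℝ) (v : so m) :
    LinearMap.trace ℝ (so m) (f.smulRight v) = f v :=
  LinearMap.trace_smulRight f v

lemma trace_eq {m : ℕ} (A : Module.End ℝ (so m)) :
    LinearMap.trace ℝ (so m) A = ∑ p ∈ pairs m, ip (A (omegaB p)) (omegaB p) := by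
  have h : A = ∑ p ∈ pairs m, (ipL (omegaB p)).smulRight (A (omegaB p)) := by
    ext1 X
    conv_lhs => rw [so_expand X]
    simp [LinearMap.sum_apply, ipL, ip_comm X]
  conv_lhs => rw [h]
  simp only [map_sum, trace_smulRight']
  exact Finset.sum_congr rfl fun p _ => ip_comm _ _

/-- trace formula with the sharp product -/
lemma trace_sharp {m : ℕ} (A B C : Module.End ℝ (so m)) :
    LinearMap.trace ℝ (so m) (sharp A B * C) = (1 / 2) * ∑ p ∈ pairs m, ∑ q ∈ pairs m,
      ip (brkt (A (omegaB p)) (B (omegaB q))) (C (brkt (omegaB p) (omegaB q))) := by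
  have h : ∀ (f : so m →ₗ[ℝ] ℝ) (v : so m), (f.smulRight v : Module.End ℝ (so m)) * C
      = (f.comp C).smulRight v := by
    intro f v; ext1 X; rfl
  simp only [sharp, smul_mul_assoc, Finset.sum_mul, map_smul, map_sum, h, trace_smulRight',
    smul_eq_mul]
  rfl

lemma ip_smul_left {m : ℕ} (c : ℝ) (X Y : so m) : ip (c • X) Y = c * ip X Y := by
  rw [ip_comm, ip_comm X]; exact (ipL Y).map_smul c X

lemma ip_neg_left {m : ℕ} (X Y : so m) : ip (-X) Y = - ip X Y := by
  rw [ip_comm, ip_comm X]; exact (ipL Y).map_neg X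

lemma ip_neg_right {m : ℕ} (X Y : so m) : ip X (-Y) = - ip X Y := (ipL X).map_neg Y

lemma brkt_smul_left {m : ℕ} (c : ℝ) (X Y : so m) : brkt (c • X) Y = c • brkt X Y := by
  apply Subtype.ext; simp [brkt, smul_sub]

lemma brkt_neg_left {m : ℕ} (X Y : so m) : brkt (-X) Y = - brkt X Y := by
  apply Subtype.ext; simp [brkt]; abel

lemma brkt_neg_right {m : ℕ} (X Y : so m) : brkt X (-Y) = - brkt X Y := by
  apply Subtype.ext; simp [brkt]; abel

lemma brkt_wB_apply {m : ℕ} (i j a b : Fin m) (X : so m) :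
    (brkt (wB i j) X).1 a b = kd a i * X.1 j b - kd a j * X.1 i b
      - kd b j * X.1 a i + kd b i * X.1 a j := by
  have h1 : ∀ c, (wB i j).1 a c * X.1 c b
      = kd a i * (kd c j * X.1 c b) - kd a j * (kd c i * X.1 c b) := by
    intro c; rw [wB_apply]; ring
  have h2 : ∀ c, X.1 a c * (wB i j).1 c b
      = kd b j * (kd c i * X.1 a c) - kd b i * (kd c j * X.1 a c) := by
    intro c; rw [wB_apply]; ring
  simp only [brkt, Matrix.sub_apply, Matrix.mul_apply, h1, h2, Finset.sum_sub_distrib,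
    ← Finset.mul_sum, kd_sum]
  ring

lemma brkt_wB_wB {m : ℕ} (i j k l : Fin m) :
    brkt (wB i j) (wB k l) = kd j k • wB i l - kd j l • wB i k
      - kd i k • wB j l + kd i l • wB j k := by
  apply Subtype.ext
  ext a b
  rw [brkt_wB_apply]
  simp only [Submodule.coe_add, Submodule.coe_sub, Submodule.coe_smul, Matrix.add_apply,
    Matrix.sub_apply, Matrix.smul_apply, smul_eq_mul, wB_apply]
  rw [kd_comm j k, kd_comm j l, kd_comm i k, kd_comm i l]
  ring

lemma ip_brkt_wB {m : ℕ} (i j : Fin m) (X Y : so m) :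
    ip (brkt (wB i j) X) Y = ∑ b, (X.1 j b * Y.1 i b - X.1 i b * Y.1 j b) := by
  have h : ∀ a b, (brkt (wB i j) X).1 a b * Y.1 a b =
      kd a i * (X.1 j b * Y.1 a b) - kd a j * (X.1 i b * Y.1 a b)
      - kd b j * (X.1 i a * Y.1 b a) + kd b i * (X.1 j a * Y.1 b a) := by
    intro a b
    rw [brkt_wB_apply, so_skew' X i a, so_skew' X j a, so_skew' Y a b]; ring
  simp only [ip_eq, h, Finset.sum_add_distrib, Finset.sum_sub_distrib, kd_sum]
  rw [Finset.sum_comm (f := fun a b => kd a i * (X.1 j b * Y.1 a b)),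
    Finset.sum_comm (f := fun a b => kd a j * (X.1 i b * Y.1 a b))]
  simp only [kd_sum]
  ring

section main
variable {m : ℕ} (ξ : Module.End ℝ (so m))

/-- curvature components -/
def cR {m : ℕ} (ξ : Module.End ℝ (so m)) (i j k l : Fin m) : ℝ := (ξ (wB i j)).1 k l

lemma cR_s1 (i j k l : Fin m) : cR ξ j i k l = - cR ξ i j k l := by
  simp [cR, wB_swap i j]

lemma cR_s2 (i j k l : Fin m) : cR ξ i j l k = - cR ξ i j k l := so_skew' _ _ _

lemma cR_pair (h : IsSelfAdjointCO ξ) (i j k l : Fin m) : cR ξ k l i j = cR ξ i j k l := by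
  have := h (wB i j) (wB k l)
  rw [ip_wB, ip_comm, ip_wB] at this
  exact this.symm

lemma cR_bianchi (h : SatBianchi ξ) (i j k l : Fin m) :
    cR ξ i j k l + cR ξ j k i l + cR ξ k i j l = 0 := by
  have := h (stdVec i) (stdVec j) (stdVec k) (stdVec l)
  change ip (ξ (wB i j)) (wB k l) + ip (ξ (wB j k)) (wB i l) + ip (ξ (wB k i)) (wB j l) = 0
    at this
  simp only [ip_wB] at this
  exact this

lemma cR_ric (h : RicM ξ = 0) (i j : Fin m) : ∑ k, cR ξ i k j k = 0 := by
  have := congrFun (congrFun h i) j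
  change ∑ k, ip (ξ (wB i k)) (wB j k) = 0 at this
  simp only [ip_wB] at this
  exact this

/-- `U i j` -/
def cU {m : ℕ} (ξ : Module.End ℝ (so m)) (i j : Fin m) : ℝ :=
  ∑ l, ∑ b, (cR ξ j l j b * cR ξ i l i b - cR ξ i l j b * cR ξ j l i b)

/-- `N i j` -/
def cN {m : ℕ} (ξ : Module.End ℝ (so m)) (i j : Fin m) : ℝ :=
  ∑ k, ∑ l, cR ξ i j k l ^ 2

lemma cU_symm (i j : Fin m) : cU ξ i j = cU ξ j i := by
  refine Finset.sum_congr rfl fun l _ => Finset.sum_congr rfl fun b _ => ?_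
  ring

lemma cN_symm (i j : Fin m) : cN ξ i j = cN ξ j i := by
  refine Finset.sum_congr rfl fun l _ => Finset.sum_congr rfl fun b _ => ?_
  rw [cR_s1]; ring

lemma cR_brkt (i j k l a b : Fin m) : (ξ (brkt (wB i j) (wB k l))).1 a b =
    kd j k * cR ξ i l a b - kd j l * cR ξ i k a b
      - kd i k * cR ξ j l a b + kd i l * cR ξ j k a b := by
  rw [brkt_wB_wB]
  simp [cR]

lemma sharp_inner (i j : Fin m) :
    ∑ k, ∑ l, ip (brkt (wB i j) (ξ (wB k l))) (ξ (brkt (wB i j) (wB k l))) = 4 * cU ξ i j := by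
  have h : ∀ k l, ip (brkt (wB i j) (ξ (wB k l))) (ξ (brkt (wB i j) (wB k l))) =
      kd j k * (∑ b, (cR ξ k l j b * cR ξ i l i b - cR ξ k l i b * cR ξ i l j b))
      + kd j l * (∑ b, (cR ξ l k j b * cR ξ i k i b - cR ξ l k i b * cR ξ i k j b))
      - kd i k * (∑ b, (cR ξ k l j b * cR ξ j l i b - cR ξ k l i b * cR ξ j l j b))
      - kd i l * (∑ b, (cR ξ l k j b * cR ξ j k i b - cR ξ l k i b * cR ξ j k j b)) := by
    intro k l
    rw [ip_brkt_wB]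
    simp only [Finset.mul_sum, ← Finset.sum_add_distrib, ← Finset.sum_sub_distrib]
    refine Finset.sum_congr rfl fun b _ => ?_
    rw [cR_brkt, cR_brkt, cR_s1 ξ k l j b, cR_s1 ξ k l i b]
    change cR ξ k l j b * _ - cR ξ k l i b * _ = _
    ring
  simp only [h, Finset.sum_add_distrib, Finset.sum_sub_distrib, kd_sum']
  rw [Finset.sum_comm (f := fun k l => kd j k * _), Finset.sum_comm (f := fun k l => kd i k * _)]
  simp only [kd_sum']
  rw [cU]
  simp only [← Finset.sum_add_distrib, ← Finset.sum_sub_distrib, Finset.mul_sum]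
  refine Finset.sum_congr rfl fun l _ => Finset.sum_congr rfl fun b _ => ?_
  ring

lemma key_row (hA : IsACO ξ) (hR : RicM ξ = 0) (i : Fin m) :
    ∑ j, (cU ξ i j + (1 / 2) * cN ξ i j) = 0 := by
  have h1 : ∑ j, ∑ l, ∑ b, cR ξ j l j b * cR ξ i l i b = 0 := by
    rw [Finset.sum_comm]
    refine Finset.sum_eq_zero fun l _ => ?_
    rw [Finset.sum_comm]
    refine Finset.sum_eq_zero fun b _ => ?_
    rw [← Finset.sum_mul]
    have h := cR_ric ξ hR l b
    have h' : ∑ j, cR ξ j l j b = ∑ j, cR ξ l j b j :=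
      Finset.sum_congr rfl fun j _ => by rw [cR_s1, cR_s2]; ring
    rw [h', h, zero_mul]
  have h2 : ∑ j, ∑ l, ∑ b, cR ξ i l j b ^ 2 = ∑ j, cN ξ i j := Finset.sum_comm
  have h3 : ∑ j, ∑ l, ∑ b, cR ξ i b j l ^ 2 = ∑ j, ∑ l, ∑ b, cR ξ i l j b ^ 2 :=
    Finset.sum_congr rfl fun j _ => Finset.sum_comm
  have h4 : ∑ j, cN ξ i j = ∑ j, ∑ l, ∑ b, cR ξ i l j b ^ 2
      + ∑ j, ∑ l, ∑ b, cR ξ i b j l ^ 2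
      - 2 * ∑ j, ∑ l, ∑ b, cR ξ i l j b * cR ξ j l i b := by
    simp only [cN, Finset.mul_sum, ← Finset.sum_add_distrib, ← Finset.sum_sub_distrib]
    refine Finset.sum_congr rfl fun j _ => Finset.sum_congr rfl fun l _ =>
      Finset.sum_congr rfl fun b _ => ?_
    have hb := cR_bianchi ξ hA.2 i l j b
    have e1 : cR ξ l j i b = - cR ξ i b j l := by
      rw [cR_s1 ξ j l, cR_pair ξ hA.1 i b j l]
    have e2 : cR ξ j l i b = cR ξ i b j l := cR_pair ξ hA.1 i b j l
    have e3 : cR ξ j i l b = - cR ξ i j l b := cR_s1 ξ i j l b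
    have e4 : cR ξ i j l b = cR ξ i l j b - cR ξ i b j l := by linarith
    rw [e4, e2]; ring
  have h5 : ∑ j, cU ξ i j = - ∑ j, ∑ l, ∑ b, cR ξ i l j b * cR ξ j l i b := by
    simp only [cU, Finset.sum_sub_distrib, h1, zero_sub]
  rw [Finset.sum_add_distrib, ← Finset.mul_sum, h5]
  rw [h3, h2] at h4
  linarith

lemma weighted (hA : IsACO ξ) (hR : RicM ξ = 0) (d : Fin m → ℝ) :
    ∑ i, ∑ j, ((d i + d j) / 2) * (cU ξ i j + (1 / 2) * cN ξ i j) = 0 := by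
  have h1 : ∑ i, ∑ j, d i * (cU ξ i j + (1 / 2) * cN ξ i j) = 0 := by
    refine Finset.sum_eq_zero fun i _ => ?_
    rw [← Finset.mul_sum, key_row ξ hA hR, mul_zero]
  have h2 : ∑ i, ∑ j, d j * (cU ξ i j + (1 / 2) * cN ξ i j) = 0 := by
    rw [Finset.sum_comm, ← h1]
    refine Finset.sum_congr rfl fun i _ => Finset.sum_congr rfl fun j _ => ?_
    rw [cU_symm, cN_symm]
  have h3 : ∀ i j, ((d i + d j) / 2) * (cU ξ i j + (1 / 2) * cN ξ i j)
      = (d i * (cU ξ i j + (1 / 2) * cN ξ i j) + d j * (cU ξ i j + (1 / 2) * cN ξ i j)) / 2 := by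
    intro i j; ring
  simp only [h3, ← Finset.sum_div, Finset.sum_add_distrib]
  rw [h1, h2]; norm_num

/-- vanishing of the trilinear form -/
lemma tri_zero (r : Module.End ℝ (so m)) (d : Fin m → ℝ)
    (hr : ∀ i j, r (wB i j) = ((d i + d j) / 2) • wB i j)
    (hA : IsACO ξ) (hR : RicM ξ = 0) :
    endIP ((2 : ℝ) • Qbil r ξ) ξ = 0 := by
  have e1 : endIP ((2 : ℝ) • Qbil r ξ) ξ
      = 2 * LinearMap.trace ℝ (so m) (ξ * ξ * r)
        + 2 * LinearMap.trace ℝ (so m) (sharp r ξ * ξ) := by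
    have c1 : LinearMap.trace ℝ (so m) (r * ξ * ξ) = LinearMap.trace ℝ (so m) (ξ * ξ * r) := by
      rw [mul_assoc, LinearMap.trace_mul_comm]
    have c2 : LinearMap.trace ℝ (so m) (ξ * r * ξ) = LinearMap.trace ℝ (so m) (ξ * ξ * r) := by
      rw [LinearMap.trace_mul_comm, mul_assoc]
    simp only [endIP, Qbil, smul_mul_assoc, add_mul, map_smul, map_add, c1, c2, smul_eq_mul]
    ring
  have e2 : LinearMap.trace ℝ (so m) (ξ * ξ * r)
      = (1 / 2) * ∑ i, ∑ j, ((d i + d j) / 2) * ((1 / 2) * cN ξ i j) := by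
    rw [trace_eq, ← pairs_sum (fun i j => ((d i + d j) / 2) * ((1 / 2) * cN ξ i j))]
    · refine Finset.sum_congr rfl fun p _ => ?_
      change ip (ξ (ξ (r (wB p.1 p.2)))) (wB p.1 p.2) = _
      rw [hr, map_smul, map_smul, ip_smul_left, hA.1, ip_eq]
      simp only [cN, cR, sq]
    · intro i j; rw [cN_symm]; ring
    · intro i
      have : ∀ k l, cR ξ i i k l = 0 := fun k l => by have := cR_s1 ξ i i k l; linarith
      simp [cN, this]
  have e3 : LinearMap.trace ℝ (so m) (sharp r ξ * ξ)
      = (1 / 2) * ∑ i, ∑ j, ((d i + d j) / 2) * cU ξ i j := by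
    have q1 : ∀ i j, ∑ q ∈ pairs m, ip (brkt (wB i j) (ξ (omegaB q)))
        (ξ (brkt (wB i j) (omegaB q))) = 2 * cU ξ i j := by
      intro i j
      have := pairs_sum (fun k l => ip (brkt (wB i j) (ξ (wB k l))) (ξ (brkt (wB i j) (wB k l))))
        (fun k l => by
          rw [wB_swap l k]
          simp only [map_neg, brkt_neg_right, ip_neg_left, ip_neg_right, neg_neg])
        (fun k => by
          have h0 : wB k k = 0 := by
            apply Subtype.ext; ext a b; simp [wB_apply]
          have h1 : ∀ Y : so m, brkt Y 0 = 0 := by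
            intro Y; apply Subtype.ext; simp [brkt]
          simp [h0, h1, ip])
      rw [sharp_inner] at this
      change ∑ q ∈ pairs m, ip (brkt (wB i j) (ξ (wB q.1 q.2)))
        (ξ (brkt (wB i j) (wB q.1 q.2))) = _
      rw [this]; ring
    have q2 : ∀ p ∈ pairs m, ∑ q ∈ pairs m, ip (brkt (r (omegaB p)) (ξ (omegaB q)))
        (ξ (brkt (omegaB p) (omegaB q))) = ((d p.1 + d p.2) / 2) * (2 * cU ξ p.1 p.2) := by
      intro p _
      rw [← q1, Finset.mul_sum]
      refine Finset.sum_congr rfl fun q _ => ?_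
      change ip (brkt (r (wB p.1 p.2)) _) (ξ (brkt (wB p.1 p.2) _)) = _
      rw [hr, brkt_smul_left, ip_smul_left]
    rw [trace_sharp, Finset.sum_congr rfl q2,
      pairs_sum (fun i j => ((d i + d j) / 2) * (2 * cU ξ i j))]
    · simp only [Finset.mul_sum]
      refine Finset.sum_congr rfl fun i _ => Finset.sum_congr rfl fun j _ => ?_
      ring
    · intro i j; rw [cU_symm]; ring
    · intro i
      simp [cU]
  have hw := weighted ξ hA hR d
  simp only [mul_add, Finset.sum_add_distrib] at hw
  rw [e1, e2, e3]
  linarith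

end main

/-- diagonal entries -/
def sd (n : ℕ) (i : Fin (n + 1)) : ℝ :=
  1 / ((n : ℝ) * ((n : ℝ) + 1)) + (2 / ((n : ℝ) - 1)) *
    (if (i : ℕ) = n then -(1 / ((n : ℝ) + 1)) else 1 / ((n : ℝ) * ((n : ℝ) + 1)))

lemma sphereR_wB (n : ℕ) (i j : Fin (n + 1)) :
    sphereR n (wB i j) = ((sd n i + sd n j) / 2) • wB i j := by
  apply Subtype.ext
  ext a b
  simp only [sphereR, LinearMap.add_apply, LinearMap.smul_apply, Module.End.one_apply,
    Submodule.coe_add, Submodule.coe_smul, Matrix.add_apply, Matrix.smul_apply, smul_eq_mul,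
    wedgeEnd, LinearMap.coe_mk, AddHom.coe_mk, sphereT, Matrix.diagonal_transpose,
    Matrix.transpose_one, Matrix.mul_one, Matrix.one_mul, Matrix.diagonal_mul,
    Matrix.mul_diagonal, wB_apply, kd, sd]
  by_cases h1 : a = i <;> by_cases h2 : b = j <;> by_cases h3 : a = j <;> by_cases h4 : b = i <;>
    simp only [h1, h2, h3, h4, if_true, if_false] <;> ring

lemma sd_last (n : ℕ) (hn : 3 ≤ n) : sd n (Fin.last n) = - (1 / ((n : ℝ) * (n - 1))) := by
  have h : (3 : ℝ) ≤ n := by exact_mod_cast hn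
  have h1 : (n : ℝ) - 1 ≠ 0 := by linarith
  simp only [sd, Fin.val_last, if_true]
  field_simp
  ring

lemma sd_cast (n : ℕ) (hn : 3 ≤ n) (i : Fin n) :
    sd n i.castSucc = 1 / ((n : ℝ) * (n - 1)) := by
  have h : (3 : ℝ) ≤ n := by exact_mod_cast hn
  have h1 : (n : ℝ) - 1 ≠ 0 := by linarith
  simp only [sd, Fin.val_castSucc, i.2.ne, if_false]
  field_simp
  ring

lemma ric_sphere (n : ℕ) (hn : 3 ≤ n) : RicM (sphereR n) =
    Matrix.diagonal (fun i => (((n : ℝ) - 1) * sd n i + 1 / n) / 2) := by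
  have h : (3 : ℝ) ≤ n := by exact_mod_cast hn
  have h1 : (n : ℝ) - 1 ≠ 0 := by linarith
  have hsum : ∑ k, sd n k = 1 / n := by
    rw [Fin.sum_univ_castSucc]
    simp only [sd_last n hn, sd_cast n hn, Finset.sum_const, Finset.card_univ, Fintype.card_fin,
      nsmul_eq_mul]
    field_simp
    ring
  ext i j
  change ∑ k, ip (sphereR n (wB i k)) (wB j k) = _
  have h2 : ∀ k, ip (sphereR n (wB i k)) (wB j k)
      = kd j i * ((sd n i + sd n k) / 2) - kd k i * (((sd n i + sd n k) / 2) * kd j k) := by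
    intro k
    rw [sphereR_wB, ip_smul_left, ip_wB, wB_apply]
    simp only [kd, if_true]; ring
  simp only [h2, Finset.sum_sub_distrib, kd_sum, ← Finset.mul_sum, ← Finset.sum_div,
    Finset.sum_add_distrib, hsum, Finset.sum_const, Finset.card_univ, Fintype.card_fin,
    nsmul_eq_mul]
  by_cases hij : i = j
  · subst hij
    simp [kd]; ring
  · simp [kd, hij, Ne.symm hij]

lemma ricNorm_sphere (n : ℕ) (hn : 3 ≤ n) : ricNormSq (sphereR n) = 1 / n := by
  have h : (3 : ℝ) ≤ n := by exact_mod_cast hn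
  have h1 : (n : ℝ) - 1 ≠ 0 := by linarith
  rw [ricNormSq, ric_sphere n hn, Matrix.diagonal_mul_diagonal, Matrix.trace_diagonal,
    Fin.sum_univ_castSucc]
  simp only [sd_last n hn, sd_cast n hn, Finset.sum_const, Finset.card_univ, Fintype.card_fin,
      nsmul_eq_mul]
  field_simp
  ring

lemma endIP_comb {m : ℕ} (A B C : Module.End ℝ (so m)) (c : ℝ) :
    endIP (A - c • B - (2 * (0 : ℝ)) • C) B = endIP A B - c * endIP B B := by
  have h : (A - c • B - (2 * (0 : ℝ)) • C) * B = A * B - c • (B * B) := by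
    ext1 X
    simp only [Module.End.mul_apply, LinearMap.sub_apply, LinearMap.smul_apply, mul_zero,
      zero_smul, sub_zero]
    exact sub_zero _
  rw [endIP, h]
  refine ((LinearMap.trace ℝ (so m)).map_sub (A * B) (c • (B * B))).trans ?_
  rw [map_smul]
  rfl

/-- For `n ≥ 3` and `𝔯` the curvature operator of the normalized
`Sⁿ × ℝ`, every unit Weyl direction `ξ ∈ ⟨W⟩` satisfies
`⟨DQ̃(𝔯)(ξ), ξ⟩ = -1/n < 0`; i.e. every Weyl direction is a stable direction. -/
theorem stmt5 (n : ℕ) (hn : 3 ≤ n) (ξ : Module.End ℝ (so (n + 1)))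
    (hξACO : IsACO ξ) (hξW : RicM ξ = 0) (hξunit : endIP ξ ξ = 1) :
    endIP (DQt (sphereR n) ξ) ξ = -(1 / (n : ℝ)) ∧
    endIP (DQt (sphereR n) ξ) ξ < 0 := by
  have hn' : (3 : ℝ) ≤ n := by exact_mod_cast hn
  have h0 := tri_zero ξ (sphereR n) (sd n) (sphereR_wB n) hξACO hξW
  have h : endIP (DQt (sphereR n) ξ) ξ = -(1 / (n : ℝ)) := by
    rw [DQt, hξW, ricNorm_sphere n hn, Matrix.mul_zero, Matrix.trace_zero, endIP_comb, h0,
      hξunit]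
    ring
  refine ⟨h, ?_⟩
  rw [h]
  have : 0 < 1 / (n : ℝ) := by positivity
  linarith
end
end

section
/- Let n ≥ 2, k ≥ 1, and for real numbers x, y, z let R_{x,y,z} be the self-adjoint endomorphism of ⋀²ℝ^{n+k} defined on the orthonormal basis {e_i ∧ e_j} by R(e_i ∧ e_j) = x·e_i ∧ e_j if 1 ≤ i < j ≤ n, R(e_i ∧ e_j) = y·e_i ∧ e_j if i ≤ n < j, and R(e_i ∧ e_j) = z·e_i ∧ e_j if n+1 ≤ i < j. Then R_{x,y,z} ∈ S²_B(⋀²ℝ^{n+k}) and Q(R_{x,y,z}) = R_{x',y',z'} where x' = (n−1)x² + ky², y' = y(y + (n−1)x + (k−1)z), and z' = (k−1)z² + ny². In particular, the ODE dR/dt = Q(R) restricted to operators of this form is the system dx/dt = (n−1)x² + ky², dy/dt = y(y + (n−1)x + (k−1)z), dz/dt = (k−1)z² + ny². -/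
open scoped BigOperators
open Matrix Filter

noncomputable section

/-- The block coefficient: `x` on `⋀²ℝⁿ`, `y` on the mixed part, `z` on `⋀²ℝᵏ`. -/
def bcoef (n k : ℕ) (x y z : ℝ) (i j : Fin (n + k)) : ℝ :=
  if (i : ℕ) < n then (if (j : ℕ) < n then x else y)
  else (if (j : ℕ) < n then y else z)

/-- The curvature operator `R_{x,y,z}` of `Sⁿ × ℝᵏ`-type: diagonal in the basis
`{e_i ∧ e_j}` with `R(e_i ∧ e_j) = x e_i ∧ e_j` for `i < j ≤ n`, `y e_i ∧ e_j` for
`i ≤ n < j`, and `z e_i ∧ e_j` for `n < i < j`. -/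
def Rxyz (n k : ℕ) (x y z : ℝ) : Module.End ℝ (so (n + k)) where
  toFun M := ⟨Matrix.of fun i j => bcoef n k x y z i j * M.1 i j, by
    rw [mem_so]
    ext i j
    simp only [Matrix.transpose_apply, Matrix.of_apply, Matrix.neg_apply]
    have hsymm : bcoef n k x y z j i = bcoef n k x y z i j := by
      unfold bcoef; split_ifs <;> rfl
    rw [hsymm, so_skew' M, mul_neg]⟩
  map_add' M N := by
    apply Subtype.ext
    ext i j
    simp [mul_add]
  map_smul' c M := by
    apply Subtype.ext
    ext i j
    simp
    ring

lemma ip_eq_sum {N : ℕ} (X Y : so N) :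
    ip X Y = (1 / 2) * ∑ i, ∑ j, X.1 i j * Y.1 i j := by
  unfold ip
  simp only [Matrix.trace, Matrix.diag_apply, Matrix.mul_apply]
  have : ∀ i j, X.1 i j * Y.1 j i = -(X.1 i j * Y.1 i j) := by
    intro i j; rw [so_skew' Y i j]; ring
  simp only [this, Finset.sum_neg_distrib]
  ring

lemma omegaB_apply {N : ℕ} (p : Fin N × Fin N) (a b : Fin N) :
    (omegaB p).1 a b = (if a = p.1 then 1 else 0) * (if b = p.2 then 1 else 0)
      - (if a = p.2 then 1 else 0) * (if b = p.1 then (1 : ℝ) else 0) := by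
  simp [omegaB, wedgeVec, stdVec, Pi.single_apply]

lemma sum_pairs {N : ℕ} (f : Fin N → Fin N → ℝ) (hs : ∀ i j, f j i = f i j)
    (h0 : ∀ i, f i i = 0) :
    ∑ p ∈ pairs N, f p.1 p.2 = (1 / 2) * ∑ i, ∑ j, f i j := by
  have h1 : ∑ p ∈ pairs N, f p.1 p.2 = ∑ i, ∑ j, if i < j then f i j else 0 := by
    unfold pairs
    rw [Finset.sum_filter, Fintype.sum_prod_type]
  have h2 : ∑ i, ∑ j, (if i < j then f i j else 0) = ∑ i, ∑ j, if j < i then f i j else 0 := by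
    rw [Finset.sum_comm]
    simp only [hs]
  have h3 : ∑ i, ∑ j, f i j = ∑ i, ∑ j, (if i < j then f i j else 0)
      + ∑ i, ∑ j, if j < i then f i j else 0 := by
    simp only [← Finset.sum_add_distrib]
    refine Finset.sum_congr rfl fun i _ => Finset.sum_congr rfl fun j _ => ?_
    rcases lt_trichotomy i j with h | h | h
    · simp [h, h.not_gt]
    · subst h; simp [h0]
    · simp [h, h.not_gt]
  rw [h3, ← h2, h1]; ring

lemma ip_omegaB {N : ℕ} (i j : Fin N) (Y : so N) : ip (omegaB (i, j)) Y = Y.1 i j := by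
  rw [ip_eq_sum]
  simp only [omegaB_apply, sub_mul, Finset.sum_sub_distrib, mul_assoc, ite_mul, one_mul, zero_mul,
    Finset.sum_ite_eq', Finset.mem_univ, if_true, Finset.sum_ite_irrel, Finset.sum_const_zero,
    mul_ite, mul_zero]
  simp
  rw [so_skew' Y i j]; ring

lemma sum_ip_omegaB {N : ℕ} (Y : so N) :
    ∑ q ∈ pairs N, ip (omegaB q) Y • omegaB q = Y := by
  apply Subtype.ext
  ext a b
  have : (∑ q ∈ pairs N, ip (omegaB q) Y • omegaB q : so N).1 a b
      = ∑ q ∈ pairs N, Y.1 q.1 q.2 * (omegaB (q.1, q.2)).1 a b := by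
    rw [Submodule.coe_sum, Matrix.sum_apply]
    refine Finset.sum_congr rfl fun q _ => ?_
    obtain ⟨i, j⟩ := q
    simp [ip_omegaB]
  rw [this, sum_pairs (fun i j => Y.1 i j * (omegaB (i, j)).1 a b)]
  · simp only [omegaB_apply, mul_sub, Finset.sum_sub_distrib]
    simp
    rw [so_skew' Y a b]; ring
  · intro i j
    simp only [omegaB_apply, so_skew' Y i j]; ring
  · intro i
    simp [omegaB_apply]

/-- The bracket with a fixed left argument as a linear map. -/
def brktL {N : ℕ} (X : so N) : so N →ₗ[ℝ] so N where
  toFun Y := brkt X Y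
  map_add' Y Z := by
    apply Subtype.ext
    simp [brkt, Matrix.mul_add, Matrix.add_mul]
    abel
  map_smul' c Y := by
    apply Subtype.ext
    simp [brkt, smul_sub]

lemma ip_brkt {N : ℕ} (X Y Z : so N) : ip (brkt X Y) Z = ip Y (brkt Z X) := by
  unfold ip brkt
  simp only [Matrix.sub_mul, Matrix.mul_sub, Matrix.trace_sub]
  rw [Matrix.trace_mul_cycle X.1 Y.1 Z.1, Matrix.mul_assoc Y.1 X.1 Z.1,
    Matrix.trace_mul_comm (Z.1 * X.1) Y.1]

lemma sharp_apply {N : ℕ} (R : Module.End ℝ (so N)) (hR : IsSelfAdjointCO R) (M : so N) :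
    sharp R R M = (1 / 2 : ℝ) • ∑ p ∈ pairs N,
      brkt (omegaB p) (R (brkt M (R (omegaB p)))) := by
  unfold sharp
  rw [LinearMap.smul_apply, LinearMap.sum_apply]
  congr 1
  refine Finset.sum_congr rfl fun p _ => ?_
  rw [LinearMap.sum_apply]
  have h := congrArg (brktL (omegaB p)) (sum_ip_omegaB (R (brkt M (R (omegaB p)))))
  rw [map_sum] at h
  refine Eq.trans (Finset.sum_congr rfl fun q _ => ?_) h
  rw [map_smul, LinearMap.smulRight_apply]
  change ip (brkt (R (omegaB p)) (R (omegaB q))) M • _ = _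
  rw [ip_brkt, hR]
  rfl

lemma bcoef_symm (n k : ℕ) (x y z : ℝ) (i j : Fin (n + k)) :
    bcoef n k x y z j i = bcoef n k x y z i j := by
  unfold bcoef; split_ifs <;> rfl

lemma Rxyz_apply (n k : ℕ) (x y z : ℝ) (M : so (n + k)) (i j : Fin (n + k)) :
    (Rxyz n k x y z M).1 i j = bcoef n k x y z i j * M.1 i j := rfl

lemma Rxyz_selfAdjoint (n k : ℕ) (x y z : ℝ) : IsSelfAdjointCO (Rxyz n k x y z) := by
  intro X Y
  simp only [ip_eq_sum, Rxyz_apply]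
  congr 1
  refine Finset.sum_congr rfl fun i _ => Finset.sum_congr rfl fun j _ => ?_
  ring

lemma Rxyz_bianchi (n k : ℕ) (x y z : ℝ) : SatBianchi (Rxyz n k x y z) := by
  intro u v w t
  simp only [ip_eq_sum, Rxyz_apply, ← mul_add, ← Finset.sum_add_distrib]
  have key : ∑ i, ∑ j, (bcoef n k x y z i j * (wedgeVec u v).1 i j * (wedgeVec w t).1 i j +
      bcoef n k x y z i j * (wedgeVec v w).1 i j * (wedgeVec u t).1 i j +
      bcoef n k x y z i j * (wedgeVec w u).1 i j * (wedgeVec v t).1 i j) = 0 := by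
    refine Finset.sum_eq_zero fun i _ => Finset.sum_eq_zero fun j _ => ?_
    simp only [wedgeVec, Matrix.of_apply]
    ring
  rw [key, mul_zero]

lemma Rxyz_omegaB (n k : ℕ) (x y z : ℝ) (i j : Fin (n + k)) :
    Rxyz n k x y z (omegaB (i, j)) = bcoef n k x y z i j • omegaB (i, j) := by
  apply Subtype.ext
  ext a b
  rw [Rxyz_apply]
  change _ = bcoef n k x y z i j * (omegaB (i, j)).1 a b
  simp only [omegaB_apply]
  by_cases h1 : a = i <;> by_cases h2 : b = j <;> by_cases h3 : a = j <;> by_cases h4 : b = i <;>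
    simp_all [bcoef_symm]

lemma brkt_omegaB_left {N : ℕ} (i j : Fin N) (Y : so N) (a b : Fin N) :
    (brkt (omegaB (i, j)) Y).1 a b =
      (if a = i then Y.1 j b else 0) - (if a = j then Y.1 i b else 0)
      - (if b = j then Y.1 a i else 0) + (if b = i then Y.1 a j else 0) := by
  simp only [brkt, Matrix.sub_apply, Matrix.mul_apply, omegaB_apply, sub_mul, mul_sub,
    Finset.sum_sub_distrib]
  simp
  ring

lemma brkt_swap {N : ℕ} (X Y : so N) : brkt X Y = - brkt Y X := by
  apply Subtype.ext
  simp [brkt]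

lemma sharp_entry (n k : ℕ) (x y z : ℝ) (M : so (n + k)) (a b : Fin (n + k)) :
    (sharp (Rxyz n k x y z) (Rxyz n k x y z) M).1 a b =
      (∑ m, bcoef n k x y z a m * bcoef n k x y z m b
        - bcoef n k x y z a b * (bcoef n k x y z a a + bcoef n k x y z b b)) * M.1 a b := by
  rw [sharp_apply _ (Rxyz_selfAdjoint n k x y z)]
  set c := bcoef n k x y z with hc
  have hcs : ∀ i j, c j i = c i j := bcoef_symm n k x y z
  let W : Fin (n + k) → Fin (n + k) → Fin (n + k) → Fin (n + k) → ℝ := fun i j r s =>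
    -(c i j * (c r s * ((if r = i then M.1 j s else 0) - (if r = j then M.1 i s else 0)
      - (if s = j then M.1 r i else 0) + (if s = i then M.1 r j else 0))))
  have hW : ∀ i j r s, (Rxyz n k x y z (brkt M (Rxyz n k x y z (omegaB (i, j))))).1 r s
      = W i j r s := by
    intro i j r s
    have : brkt M (Rxyz n k x y z (omegaB (i, j))) = -(c i j • brkt (omegaB (i, j)) M) := by
      rw [Rxyz_omegaB, brkt_swap (omegaB (i, j)) M]
      have := map_smul (brktL M) (c i j) (omegaB (i, j))
      rw [smul_neg, neg_neg]
      exact this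
    rw [Rxyz_apply, this]
    change c r s * -(c i j * (brkt (omegaB (i, j)) M).1 r s) = _
    rw [brkt_omegaB_left]
    simp only [W]
    ring
  let G : Fin (n + k) → Fin (n + k) → ℝ := fun i j =>
    (if a = i then W i j j b else 0) - (if a = j then W i j i b else 0)
      - (if b = j then W i j a i else 0) + (if b = i then W i j a j else 0)
  have hG : ((1 / 2 : ℝ) • ∑ p ∈ pairs (n + k),
      brkt (omegaB p) (Rxyz n k x y z (brkt M (Rxyz n k x y z (omegaB p)))) : so (n + k)).1 a b
      = (1 / 2) * ∑ p ∈ pairs (n + k), G p.1 p.2 := by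
    rw [Submodule.coe_smul, Matrix.smul_apply, Submodule.coe_sum, Matrix.sum_apply, smul_eq_mul]
    congr 1
    refine Finset.sum_congr rfl fun p _ => ?_
    obtain ⟨i, j⟩ := p
    rw [brkt_omegaB_left]
    simp only [hW, G]
  have hWs : ∀ i j r s, W j i r s = - W i j r s := by
    intro i j r s
    simp only [W, hcs i j]; ring
  have hd : ∀ i, M.1 i i = 0 := fun i => by linarith [so_skew' M i i]
  rw [hG, sum_pairs G]
  · simp only [G, Finset.sum_add_distrib, Finset.sum_sub_distrib]
    have e1 : ∑ m, W a m m b = (∑ m, c a m * c m b - c a b * (c a a + c b b)) * M.1 a b := by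
      have h : ∀ m, W a m m b = c a m * c m b * M.1 a b
          - (if m = a then c a a * c a b * M.1 a b else 0)
          - (if m = b then c a b * c b b * M.1 a b else 0) := by
        intro m
        simp only [W, if_true, hd]
        by_cases h1 : m = a
        · subst h1
          by_cases h2 : m = b
          · subst h2; simp [hd]
          · simp [h2, hd, Ne.symm h2, so_skew' M m b]
        · by_cases h2 : m = b
          · subst h2
            have := so_skew' M a m
            simp [h1, hd, Ne.symm h1, this, hcs a m]
            try ring
          · simp [h1, h2, Ne.symm h1, Ne.symm h2, hd, hcs b m]
            try ring
      simp only [h, Finset.sum_sub_distrib, ← Finset.sum_mul, Finset.sum_ite_eq',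
        Finset.mem_univ, if_true]
      ring
    have e2 : ∑ m, W b m a m = (∑ m, c a m * c m b - c a b * (c a a + c b b)) * M.1 a b := by
      have h : ∀ m, W b m a m = c a m * c m b * M.1 a b
          - (if m = a then c a a * c a b * M.1 a b else 0)
          - (if m = b then c a b * c b b * M.1 a b else 0) := by
        intro m
        simp only [W, if_true, hd]
        by_cases h1 : m = a
        · subst h1
          by_cases h2 : m = b
          · subst h2; simp [hd]
          · simp [h2, hd, Ne.symm h2, so_skew' M m b]
        · by_cases h2 : m = b
          · subst h2
            have := so_skew' M a m
            simp [h1, hd, Ne.symm h1, this, hcs a m]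
            try ring
          · simp [h1, h2, Ne.symm h1, Ne.symm h2, hd, hcs b m]
            try ring
      simp only [h, Finset.sum_sub_distrib, ← Finset.sum_mul, Finset.sum_ite_eq',
        Finset.mem_univ, if_true]
      ring
    have e3 : ∑ i, ∑ j, (if a = i then W i j j b else 0) = ∑ m, W a m m b := by
      rw [Finset.sum_comm]; simp
    have e4 : ∑ i, ∑ j, (if a = j then W i j i b else 0) = - ∑ m, W a m m b := by
      simp [← Finset.sum_neg_distrib, ← hWs]
    have e5 : ∑ i, ∑ j, (if b = j then W i j a i else 0) = - ∑ m, W b m a m := by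
      simp [← Finset.sum_neg_distrib, ← hWs]
    have e6 : ∑ i, ∑ j, (if b = i then W i j a j else 0) = ∑ m, W b m a m := by
      rw [Finset.sum_comm]; simp
    rw [e3, e4, e5, e6, e1, e2]
    ring
  · intro i j
    simp only [G, hWs i j]
    split_ifs <;> ring
  · intro i
    have : ∀ r s, W i i r s = 0 := fun r s => by linarith [hWs i i r s]
    simp [G, this]

/-- For `n ≥ 2`, `k ≥ 1`, the operator `R_{x,y,z}` is an algebraic
curvature operator, and `Q(R_{x,y,z}) = R_{x',y',z'}` with
`x' = (n-1)x² + ky²`, `y' = y(y + (n-1)x + (k-1)z)`, `z' = (k-1)z² + ny²`;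
so the curvature ODE `dR/dt = Q(R)` restricted to this family is the system
`dx/dt = (n-1)x² + ky²`, `dy/dt = y(y + (n-1)x + (k-1)z)`, `dz/dt = (k-1)z² + ny²`. -/
theorem stmt7 (n k : ℕ) (hn : 2 ≤ n) (hk : 1 ≤ k) (x y z : ℝ) :
    IsACO (Rxyz n k x y z) ∧
    Qop (Rxyz n k x y z) =
      Rxyz n k (((n : ℝ) - 1) * x ^ 2 + (k : ℝ) * y ^ 2)
        (y * (y + ((n : ℝ) - 1) * x + ((k : ℝ) - 1) * z))
        (((k : ℝ) - 1) * z ^ 2 + (n : ℝ) * y ^ 2) := by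
  refine ⟨⟨Rxyz_selfAdjoint n k x y z, Rxyz_bianchi n k x y z⟩, ?_⟩
  apply LinearMap.ext
  intro M
  apply Subtype.ext
  ext a b
  rw [Rxyz_apply]
  change (Rxyz n k x y z (Rxyz n k x y z M)).1 a b
    + (sharp (Rxyz n k x y z) (Rxyz n k x y z) M).1 a b = _
  rw [sharp_entry, Rxyz_apply, Rxyz_apply, ← mul_assoc, ← add_mul]
  congr 1
  rw [Fin.sum_univ_add]
  by_cases ha : (a : ℕ) < n <;> by_cases hb : (b : ℕ) < n <;>
    simp [bcoef, ha, hb] <;> ring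
end
end

section
/- For every R ∈ S²_B(⋀²ℝⁿ), writing 𝐈 = id ∧ id (the identity of ⋀²ℝⁿ), one has Q(R, 𝐈) = R + R # 𝐈 = (n−1)R_I + ((n−2)/2)R_{Ric₀}. In particular Q(𝐈, W) = 0 for every Weyl curvature operator W ∈ ⟨W⟩. -/
open scoped BigOperators
open Matrix Filter

noncomputable section

lemma h13_ip_omega {n : ℕ} (X : so n) (k l : Fin n) :
    ip X (wedgeVec (stdVec k) (stdVec l)) = X.1 k l := by
  have h : ip X (wedgeVec (stdVec k) (stdVec l)) = -(1/2) * (X.1 l k - X.1 k l) := by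
    simp [ip, wedgeVec, stdVec, Matrix.trace, Matrix.mul_apply, Pi.single_apply, mul_sub,
      Finset.sum_sub_distrib]
  rw [h, so_skew' X k l]; ring

lemma h13_omega_apply {n : ℕ} (i j a b : Fin n) :
    (omegaB (i, j)).1 a b
      = (if a = i then 1 else 0) * (if b = j then 1 else 0)
        - (if a = j then (1:ℝ) else 0) * (if b = i then 1 else 0) := by
  simp [omegaB, wedgeVec, stdVec, Pi.single_apply]

lemma h13_omega_swap {n : ℕ} (i j : Fin n) :
    (omegaB (i, j) : so n) = - omegaB (j, i) := by
  apply Subtype.ext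
  ext a b
  rw [Submodule.coe_neg, Matrix.neg_apply, h13_omega_apply, h13_omega_apply]
  ring

lemma h13_sum_pairs {n : ℕ} {M : Type*} [AddCommGroup M] [Module ℝ M]
    (f : Fin n → Fin n → M) (hs : ∀ i j, f i j = f j i) (h0 : ∀ i, f i i = 0) :
    ∑ p ∈ pairs n, f p.1 p.2 = (1/2 : ℝ) • ∑ i, ∑ j, f i j := by
  have key : ∑ i, ∑ j, f i j = (2:ℝ) • ∑ p ∈ pairs n, f p.1 p.2 := by
    rw [← Finset.sum_product', two_smul]
    have e1 : ∑ p ∈ pairs n, f p.1 p.2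
        = ∑ p : Fin n × Fin n, if p.1 < p.2 then f p.1 p.2 else 0 := by
      rw [pairs, Finset.sum_filter]
    have e2 : ∑ p ∈ pairs n, f p.1 p.2
        = ∑ p : Fin n × Fin n, if p.2 < p.1 then f p.1 p.2 else 0 := by
      rw [e1]
      refine Fintype.sum_equiv (Equiv.prodComm _ _) _ _ ?_
      rintro ⟨i, j⟩
      by_cases h : i < j <;> simp [h, hs i j]
    nth_rewrite 1 [e1]
    rw [e2, ← Finset.sum_add_distrib, Finset.univ_product_univ]
    refine Finset.sum_congr rfl ?_
    rintro ⟨i, j⟩ _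
    rcases lt_trichotomy i j with h | h | h
    · simp [h, h.le, not_lt.mpr h.le]
    · subst h; simp [h0]
    · simp [h, h.le, not_lt.mpr h.le]
  rw [key, smul_smul]; norm_num

lemma h13_expand' {n : ℕ} (X : so n) :
    X = (1/2 : ℝ) • ∑ i, ∑ j, X.1 i j • (omegaB (i, j) : so n) := by
  apply Subtype.ext
  ext a b
  simp only [Submodule.coe_smul, Submodule.coe_sum, Matrix.smul_apply, Matrix.sum_apply,
    h13_omega_apply]
  simp [mul_sub, Finset.sum_sub_distrib]
  rw [so_skew' X a b]; ring

lemma h13_expand {n : ℕ} (X : so n) :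
    ∑ q ∈ pairs n, ip X (omegaB q) • omegaB q = X := by
  have e : ∑ q ∈ pairs n, ip X (omegaB q) • omegaB q
      = ∑ q ∈ pairs n, (fun i j => X.1 i j • (omegaB (i, j) : so n)) q.1 q.2 := by
    refine Finset.sum_congr rfl fun q _ => ?_
    simp [omegaB, h13_ip_omega]
  rw [e, h13_sum_pairs (fun i j => X.1 i j • (omegaB (i, j) : so n))]
  · exact (h13_expand' X).symm
  · intro i j
    rw [h13_omega_swap i j, so_skew' X j i]
    simp
  · intro i
    have := so_skew' X i i
    have h : X.1 i i = 0 := by linarith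
    simp [h]

lemma h13_brkt_sum {n : ℕ} {ι : Type*} (s : Finset ι) (X : so n) (c : ι → ℝ) (Y : ι → so n) :
    brkt X (∑ q ∈ s, c q • Y q) = ∑ q ∈ s, c q • brkt X (Y q) := by
  apply Subtype.ext
  simp [brkt, Matrix.mul_sum, Matrix.sum_mul, Finset.sum_sub_distrib, smul_sub]

lemma h13_ad {n : ℕ} (X Y Z : so n) : ip (brkt X Y) Z = ip (brkt Z X) Y := by
  simp only [ip, brkt, sub_mul, Matrix.trace_sub]
  rw [Matrix.trace_mul_cycle X.1 Y.1 Z.1, Matrix.trace_mul_cycle Y.1 X.1 Z.1,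
    Matrix.trace_mul_cycle Z.1 Y.1 X.1, Matrix.trace_mul_cycle X.1 Z.1 Y.1]

lemma h13_sharp {n : ℕ} (R : Module.End ℝ (so n)) (X : so n) :
    sharp R 1 X = (1/4 : ℝ) • ∑ i, ∑ j, brkt (omegaB (i, j)) (brkt X (R (omegaB (i, j)))) := by
  have e : sharp R 1 X = (1/2 : ℝ) • ∑ p ∈ pairs n,
      (fun i j => brkt (omegaB (i, j)) (brkt X (R (omegaB (i, j))))) p.1 p.2 := by
    simp only [sharp, LinearMap.smul_apply, LinearMap.sum_apply]
    congr 1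
    refine Finset.sum_congr rfl fun p _ => ?_
    conv_rhs => rw [← h13_expand (brkt X (R (omegaB (p.1, p.2)))), h13_brkt_sum]
    refine Finset.sum_congr rfl fun q _ => ?_
    simp only [LinearMap.smulRight_apply, ipL, LinearMap.coe_mk, AddHom.coe_mk,
      Module.End.one_apply]
    rw [h13_ad]
  rw [e, h13_sum_pairs (fun i j => brkt (omegaB (i, j)) (brkt X (R (omegaB (i, j))))), smul_smul]
  · norm_num
  · intro i j
    rw [h13_omega_swap i j]
    apply Subtype.ext
    simp [brkt]
    noncomm_ring
  · intro i
    have h : (omegaB (i, i) : so n) = 0 := by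
      apply Subtype.ext; ext a b; rw [h13_omega_apply]; simp
    simp only [h]
    apply Subtype.ext
    simp [brkt]

lemma h13_core {n : ℕ} (R : Module.End ℝ (so n)) (h : IsACO R) :
    R + sharp R 1 = wedgeEnd (RicM R) 1 := by
  obtain ⟨hsa, hb⟩ := h
  set r : Fin n → Fin n → Fin n → Fin n → ℝ := fun i j k l => (R (omegaB (i, j))).1 k l with hr
  have r1 : ∀ i j k l, r i j k l = - r j i k l := by
    intro i j k l
    simp only [hr]
    rw [h13_omega_swap i j]; simp
  have r2 : ∀ i j k l, r i j k l = - r i j l k := fun i j k l => so_skew' _ _ _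
  have ipc : ∀ X Y : so n, ip X Y = ip Y X := by
    intro X Y; simp only [ip]; rw [Matrix.trace_mul_comm]
  have r3 : ∀ i j k l, r i j k l = r k l i j := by
    intro i j k l
    have := hsa (omegaB (i, j)) (omegaB (k, l))
    rw [ipc (omegaB (i, j))] at this
    simp only [omegaB, h13_ip_omega] at this
    exact this
  have rb : ∀ i j k l, r i j k l + r j k i l + r k i j l = 0 := by
    intro i j k l
    have := hb (stdVec i) (stdVec j) (stdVec k) (stdVec l)
    simp only [h13_ip_omega] at this
    exact this
  have ric : ∀ a c, RicM R a c = ∑ k, r a k c k := by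
    intro a c
    simp only [RicM, Matrix.of_apply, h13_ip_omega]; rfl
  refine LinearMap.ext fun X => Subtype.ext ?_
  ext a b
  have hR : (R X).1 a b = (1/2) * ∑ j, ∑ c, X.1 j c * r j c a b := by
    conv_lhs => rw [h13_expand' X]
    simp [map_sum, Matrix.sum_apply, hr]
  have hS : (sharp R 1 X).1 a b = (1/2) * (∑ j, (∑ c, X.1 j c * r a j c b - ∑ c, r a j j c * X.1 c b)
      - ∑ j, (∑ c, X.1 j c * r b j c a - ∑ c, r b j j c * X.1 c a)) := by
    have br : ∀ i j k l, (brkt X (R (omegaB (i, j)))).1 k l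
        = ∑ c, X.1 k c * r i j c l - ∑ c, r i j k c * X.1 c l := by
      intro i j k l
      simp [brkt, Matrix.mul_apply, hr]
    have bsw : ∀ i j k l, (brkt X (R (omegaB (i, j)))).1 k l = - (brkt X (R (omegaB (j, i)))).1 k l := by
      intro i j k l
      rw [br, br]
      simp only [r1 i j]
      simp; ring
    simp only [← br]
    rw [h13_sharp]
    have ob : ∀ (i j : Fin n) (Z : so n), (brkt (omegaB (i, j)) Z).1 a b =
       ((if a = i then Z.1 j b else 0) - (if a = j then Z.1 i b else 0))
        - ((if b = j then Z.1 a i else 0) - (if b = i then Z.1 a j else 0)) := by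
      intro i j Z
      simp only [brkt, Matrix.sub_apply, Matrix.mul_apply, h13_omega_apply]
      simp [sub_mul, mul_sub, Finset.sum_sub_distrib]
    simp only [Submodule.coe_smul, Submodule.coe_sum, Matrix.smul_apply, Matrix.sum_apply, ob,
      Finset.sum_sub_distrib]
    have t1 : ∀ f : Fin n → Fin n → ℝ, ∑ i, ∑ j, (if a = i then f i j else 0) = ∑ j, f a j := by
      intro f; rw [Finset.sum_comm]; simp
    have t2 : ∀ f : Fin n → Fin n → ℝ, ∑ i, ∑ j, (if b = i then f i j else 0) = ∑ j, f b j := by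
      intro f; rw [Finset.sum_comm]; simp
    rw [t1 (fun i j => (brkt X (R (omegaB (i, j)))).1 j b),
      t2 (fun i j => (brkt X (R (omegaB (i, j)))).1 a j)]
    simp only [Finset.sum_ite_eq, Finset.mem_univ, if_true]
    have u1 : ∑ i, (brkt X (R (omegaB (i, a)))).1 i b = - ∑ i, (brkt X (R (omegaB (a, i)))).1 i b := by
      rw [← Finset.sum_neg_distrib]; exact Finset.sum_congr rfl fun i _ => bsw _ _ _ _
    have u2 : ∑ i, (brkt X (R (omegaB (i, b)))).1 a i = ∑ i, (brkt X (R (omegaB (b, i)))).1 i a := by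
      refine Finset.sum_congr rfl fun i _ => ?_
      rw [bsw]; exact (so_skew' _ _ _).symm
    have u3 : ∑ i, (brkt X (R (omegaB (b, i)))).1 a i = - ∑ i, (brkt X (R (omegaB (b, i)))).1 i a := by
      rw [← Finset.sum_neg_distrib]; exact Finset.sum_congr rfl fun i _ => so_skew' _ _ _
    rw [u1, u2, u3, smul_eq_mul]; ring
  have hW : (wedgeEnd (RicM R) 1 X).1 a b
      = (1/2) * (∑ c, RicM R a c * X.1 c b - ∑ c, RicM R b c * X.1 c a) := by
    simp only [wedgeEnd, LinearMap.coe_mk, AddHom.coe_mk, Matrix.smul_apply, Matrix.add_apply,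
      Matrix.transpose_one, Matrix.mul_one, Matrix.one_mul, Matrix.mul_apply,
      Matrix.transpose_apply, smul_eq_mul]
    rw [sub_eq_add_neg, ← Finset.sum_neg_distrib]
    congr 2
    refine Finset.sum_congr rfl fun c _ => ?_
    rw [so_skew' X c a]; ring
  have hric : ∀ a b, ∑ c, RicM R a c * X.1 c b = - ∑ j, ∑ c, r a j j c * X.1 c b := by
    intro a b
    rw [Finset.sum_comm, ← Finset.sum_neg_distrib]
    refine Finset.sum_congr rfl fun c _ => ?_
    rw [ric, Finset.sum_mul, ← Finset.sum_neg_distrib]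
    refine Finset.sum_congr rfl fun k _ => ?_
    rw [r2 a k c k]; ring
  have hz : ∑ j, ∑ c, X.1 j c * r j c a b + ∑ j, ∑ c, X.1 j c * r a j c b
      - ∑ j, ∑ c, X.1 j c * r b j c a = 0 := by
    rw [← Finset.sum_add_distrib, ← Finset.sum_sub_distrib]
    refine Finset.sum_eq_zero fun j _ => ?_
    rw [← Finset.sum_add_distrib, ← Finset.sum_sub_distrib]
    refine Finset.sum_eq_zero fun c _ => ?_
    have e1 := rb j c a b
    have e2 := r3 b j c a
    have e3 := r2 c a b j
    linear_combination X.1 j c * (e1 - e2 - e3)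
  rw [hW, hric, hric]
  change (R X).1 a b + (sharp R 1 X).1 a b = _
  rw [hR, hS]
  simp only [Finset.sum_sub_distrib]
  linear_combination (1/2) * hz

lemma h13_sharp_comm {n : ℕ} (A B : Module.End ℝ (so n)) : sharp A B = sharp B A := by
  simp only [sharp]
  rw [Finset.sum_comm]
  have hb : ∀ X Y : so n, brkt X Y = - brkt Y X := by
    intro X Y; apply Subtype.ext; simp [brkt]
  congr 1
  refine Finset.sum_congr rfl fun p _ => Finset.sum_congr rfl fun q _ => ?_
  refine LinearMap.ext fun Z => ?_
  rw [hb (A _), hb (omegaB q) (omegaB p)]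
  simp [ipL, ip]

lemma h13_Q {n : ℕ} (R : Module.End ℝ (so n)) : Qbil R 1 = R + sharp R 1 := by
  simp only [Qbil, mul_one, one_mul]
  rw [← two_smul ℝ R, smul_smul]; norm_num

/-- For every `R ∈ S²_B(⋀²ℝⁿ)`, with `𝐈 = id ∧ id` the identity of
`⋀²ℝⁿ`, one has `Q(R, 𝐈) = R + R # 𝐈 = (n-1) R_I + ((n-2)/2) R_{Ric₀}`, where
`R_I = (s(R)/(n(n-1))) 𝐈` and `R_{Ric₀} = (2/(n-2)) Ric₀(R) ∧ id`.  In particular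
`Q(𝐈, W) = 0` for every Weyl curvature operator `W`. -/
theorem stmt13 (n : ℕ) (hn : 3 ≤ n) (R : Module.End ℝ (so n)) (hACO : IsACO R) :
    Qbil R 1 = R + sharp R 1 ∧
    Qbil R 1 = ((n : ℝ) - 1) • compI R + (((n : ℝ) - 2) / 2) • compRic0 R ∧
    (∀ W : Module.End ℝ (so n), IsACO W → RicM W = 0 →
      Qbil (1 : Module.End ℝ (so n)) W = 0) := by
  refine ⟨h13_Q R, ?_, ?_⟩
  · rw [h13_Q, h13_core R hACO]
    have h3 : (3:ℝ) ≤ n := by exact_mod_cast hn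
    have n0 : (n:ℝ) ≠ 0 := by linarith
    have n1 : (n:ℝ) - 1 ≠ 0 := by intro h; linarith
    have n2 : (n:ℝ) - 2 ≠ 0 := by intro h; linarith
    rw [compI, compRic0, smul_smul, smul_smul]
    have c1 : ((n:ℝ) - 1) * (scal R / ((n:ℝ) * ((n:ℝ) - 1))) = scal R / n := by field_simp
    have c2 : (((n:ℝ) - 2) / 2) * (2 / ((n:ℝ) - 2)) = 1 := by field_simp
    rw [c1, c2, one_smul]
    refine LinearMap.ext fun X => Subtype.ext ?_
    ext a b
    simp [wedgeEnd, Ric0M, sub_mul, mul_sub]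
    ring
  · intro W hW h0
    have e : Qbil (1 : Module.End ℝ (so n)) W = Qbil W 1 := by
      rw [Qbil, Qbil, h13_sharp_comm, add_comm (1 * W)]
    rw [e, h13_Q, h13_core W hW, h0]
    refine LinearMap.ext fun X => Subtype.ext ?_
    simp [wedgeEnd]
end
end
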